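/- Let q be a prime power and n ≥ q + 1. Then there exists a q-ary single-error-correcting code of length n with two instances of feedback and M_cf(n) messages. -/

import Mathlib

/-!
Let `N = n - 1` and let `m = 1 + q + ⋯ + q ^ (k - 1)` be the largest Hamming length not exceeding
`N`. Except for `n = q + 1`, where the Hamming code itself is large enough, the three blocks have
lengths `1`, `d = N - m` and `m`.

The first symbol splits the messages into `q` classes of almost equal size (`Mcf_split`). After it
is received, the messages of one class have suffered no error and all the others exactly one, and
the definition of `Mcf` is what makes the volume bound for the remaining `N` symbols hold.

In the second block, the messages without error are spread almost evenly over the `q ^ d` words;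
those sharing a word are separated in the third block by a code of distance three
(`exists_distance_three_code`). For every received prefix, the balls of the messages with that
prefix must leave room for one point for each message with a neighbouring prefix. This local
condition is met by a constant weight function, or by one that is larger by one where the coordinate
sum lies in a given set (`exists_weights`); the constant weight works as soon as `2 * (k + 1) ≤ m`,
and only finitely many `(q, n)` remain (`exists_params`). The messages that already suffered an
error then take distinct points outside all clouds (`exists_one_feedback`).
-/

/-- A `q`-ary single-error-correcting code of length `n1 + n2 + n3` with two instances
of feedback and `M` messages: encoding maps `f`, `g`, `h` for the three blocks (each
depending on the symbols received in the earlier blocks), whose clouds are pairwise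
disjoint. -/
def TwoFeedbackCode (q n1 n2 n3 M : ℕ) : Prop :=
  ∃ (f : Fin M → (Fin n1 → Fin q))
    (g : Fin M → (Fin n1 → Fin q) → (Fin n2 → Fin q))
    (h : Fin M → (Fin n1 → Fin q) → (Fin n2 → Fin q) → (Fin n3 → Fin q)),
    ∀ m m' : Fin M, m ≠ m' →
      Disjoint
        {p : (Fin n1 → Fin q) × (Fin n2 → Fin q) × (Fin n3 → Fin q) |
          hammingDist p.1 (f m) + hammingDist p.2.1 (g m p.1) +
            hammingDist p.2.2 (h m p.1 p.2.1) ≤ 1}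
        {p : (Fin n1 → Fin q) × (Fin n2 → Fin q) × (Fin n3 → Fin q) |
          hammingDist p.1 (f m') + hammingDist p.2.1 (g m' p.1) +
            hammingDist p.2.2 (h m' p.1 p.2.1) ≤ 1}

/-- `U_q(n)`: the largest multiple of `q` not exceeding the Hamming bound. -/
def Uq (q n : ℕ) : ℕ := q * (q ^ n / (q * (1 + n * (q - 1))))

/-- `p_q(n) = (1 + n(q-1)) (U_q(n) + q) - q^n`. -/
def pq (q n : ℕ) : ℕ := (1 + n * (q - 1)) * (Uq q n + q) - q ^ n

/-- The optimal complete-feedback size `M_cf(n)`. -/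
def Mcf (q n : ℕ) : ℕ :=
  if q ^ 2 ≤ pq q n then Uq q n else Uq q n + q - pq q n / q

/-! ### Arithmetic of the parameters -/

/-- The only facts about `Mcf` used by the construction: the messages split into `q` classes of at
most `A` messages each so that, once the first symbol has singled out one class, the volume bound
for the `N` remaining symbols holds. Here `A * (N * (q - 1)) + M` is the volume
`A * (1 + N * (q - 1)) + (M - A)` of `A` messages with no error and `M - A` with one error. The last
inequality is a slightly stronger bound on `A` alone, with slack `q - 1`. -/
lemma Mcf_split (q N : ℕ) (hq : 2 ≤ q) : ∃ A : ℕ, Mcf q (N + 1) ≤ q * A ∧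
    A * (N * (q - 1)) + Mcf q (N + 1) ≤ q ^ N ∧
    A * (1 + (N + 1) * (q - 1)) ≤ q ^ N + (q - 1) := by
  obtain ⟨s, rfl⟩ : ∃ s, q = s + 1 := ⟨q - 1, by omega⟩
  have hs : s + 1 - 1 = s := rfl
  set V := 1 + (N + 1) * s with hV
  have hU : Uq (s + 1) (N + 1) = (s + 1) * ((s + 1) ^ N / V) := by
    rw [Uq, hs, pow_succ', Nat.mul_div_mul_left _ _ (by omega)]
  have hp : pq (s + 1) (N + 1) = (s + 1) * (V - (s + 1) ^ N % V) := by
    rw [pq, hs, hU, Nat.mul_sub, ← hV]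
    have := Nat.div_add_mod ((s + 1) ^ N) V
    generalize (s + 1) ^ N / V = u at *
    generalize (s + 1) ^ N % V = r at *
    have h2 : (s + 1) ^ (N + 1) = (s + 1) * (V * u) + (s + 1) * r := by
      rw [pow_succ', ← this]; ring
    rw [h2, show V * ((s + 1) * u + (s + 1)) = (s + 1) * (V * u) + (s + 1) * V by ring]
    omega
  have hdm := Nat.div_add_mod ((s + 1) ^ N) V
  have hlt : (s + 1) ^ N % V < V := Nat.mod_lt _ (by omega)
  have hM : Mcf (s + 1) (N + 1) = if (s + 1) ^ 2 ≤ pq (s + 1) (N + 1) then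
      Uq (s + 1) (N + 1) else
      Uq (s + 1) (N + 1) + (s + 1) - pq (s + 1) (N + 1) / (s + 1) := rfl
  rw [hM, hU, hp, Nat.mul_div_cancel_left _ (by omega), hs]
  generalize (s + 1) ^ N / V = u at *
  generalize (s + 1) ^ N % V = r at *
  have hNs : (N + 1) * s = N * s + s := by ring
  have e1 : V * u = u * (N * s) + (s + 1) * u := by rw [hV, hNs]; ring
  split_ifs with h
  · exact ⟨u, le_rfl, by omega, by rw [mul_comm u V]; omega⟩
  · have h' : V - r < s + 1 := by
      rw [pow_two] at h
      exact lt_of_not_ge fun hc => h (Nat.mul_le_mul_left _ hc)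
    refine ⟨u + 1, ?_, ?_, ?_⟩
    · rw [mul_add]; omega
    · rw [add_mul, one_mul]; omega
    · rw [add_mul, mul_comm u V]; omega

/-- When `m` is at least twice the redundancy `k + 1`, the constant weight `q ^ m / X`, where
`X = 1 + (d + m) * (q - 1)`, is large enough: the rounding loss, less than `X`, is paid for by the
`q - 1` extra units per message in `hA`. -/
lemma generic_params (q k m d A : ℕ) (hq : 2 ≤ q) (hm : 2 * (k + 1) ≤ m)
    (hX : 1 + (d + m) * (q - 1) + (q - 1) ≤ q ^ (k + 1))
    (hA : A * (1 + (d + m + 1) * (q - 1)) ≤ q ^ (d + m) + (q - 1)) :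
    ∃ c, A ≤ c * q ^ d ∧ c * (1 + (d + m) * (q - 1)) ≤ q ^ m := by
  set X := 1 + (d + m) * (q - 1) with hXdef
  refine ⟨q ^ m / X, ?_, Nat.div_mul_le_self _ _⟩
  set K := q ^ m / X with hK
  have hX0 : 0 < X := by omega
  have e : 1 + (d + m + 1) * (q - 1) = X + (q - 1) := by rw [hXdef]; ring
  rw [e] at hA
  have h1 : q ^ m < (K + 1) * X := by
    rw [mul_comm]; exact Nat.lt_mul_div_succ _ hX0
  have h2 : q ^ (k + 1) + (q - 1) ≤ K := by
    rw [hK, Nat.le_div_iff_mul_le hX0]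
    -- `X ≤ Q - (q - 1)` for `Q = q ^ (k + 1)`, and `(Q + (q - 1)) * (Q - (q - 1)) ≤ Q ^ 2`.
    have hle : q ^ (2 * (k + 1)) ≤ q ^ m := Nat.pow_le_pow_right (by omega) hm
    refine le_trans ?_ hle
    rw [two_mul, pow_add q (k + 1) (k + 1)]
    generalize q ^ (k + 1) = Q at *
    obtain ⟨e, rfl⟩ : ∃ e, Q = X + (q - 1) + e := ⟨Q - (X + (q - 1)), by omega⟩
    generalize q - 1 = s
    nlinarith [Nat.zero_le (s * s), Nat.zero_le (s * e), Nat.zero_le (e * X),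
      Nat.zero_le (e * e)]
  have h3 : q ^ m + q ≤ K * (X + (q - 1)) := by
    have : K * 1 ≤ K * (q - 1) := Nat.mul_le_mul_left _ (by omega)
    rw [mul_add]
    rw [add_mul] at h1
    omega
  have h4 : A * (X + (q - 1)) ≤ K * q ^ d * (X + (q - 1)) := by
    refine hA.trans ?_
    have h5 : (q ^ m + q) * q ^ d ≤ K * (X + (q - 1)) * q ^ d := Nat.mul_le_mul_right _ h3
    have h6 : 1 ≤ q ^ d := Nat.one_le_pow _ _ (by omega)
    have h7 : q * 1 ≤ q * q ^ d := Nat.mul_le_mul_left _ h6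
    calc q ^ (d + m) + (q - 1) ≤ (q ^ m + q) * q ^ d := by
          rw [add_mul, pow_add, mul_comm (q ^ d)]; omega
      _ ≤ _ := h5
      _ = _ := by ring
  exact Nat.le_of_mul_le_mul_right h4 (by omega)

/-- The triples `(q, k, m)` escaping `generic_params`. The weight is `c` everywhere and one more on
a fraction `t / q` of the words, with `c` and `t` obtained by rounding the largest admissible `A`. -/
lemma exceptional_params :
    ∀ qkm ∈ ([(2, 2, 3), (2, 3, 7), (3, 2, 4), (4, 2, 5)] : List (ℕ × ℕ × ℕ)),
    ∀ d ∈ List.range (qkm.1 ^ qkm.2.1 - 1),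
      let q := qkm.1
      let m := qkm.2.2
      let X := 1 + (d + 1 + m) * (q - 1)
      let A := (q ^ (d + 1 + m) + (q - 1)) / (X + (q - 1))
      let c := A / q ^ (d + 1)
      let t := (A % q ^ (d + 1) + q ^ d - 1) / q ^ d
      A ≤ c * q ^ (d + 1) + t * q ^ d ∧ t ≤ q ∧
      (c * X + (1 + m * (q - 1)) + (d + 1) * (t - 1) ≤ q ^ m ∨ t = 0) ∧
        c * X + (d + 1) * t ≤ q ^ m := by
  decide

lemma le_geomSum (q : ℕ) (hq : 2 ≤ q) {k₀ k : ℕ} (hk : k₀ ≤ k)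
    (h : 2 * (k₀ + 1) ≤ ∑ i ∈ Finset.range k₀, q ^ i) :
    2 * (k + 1) ≤ ∑ i ∈ Finset.range k, q ^ i := by
  induction k, hk using Nat.le_induction with
  | base => exact h
  | succ j hj ih =>
    have hj0 : j ≠ 0 := by
      rintro rfl
      simp at ih
    have := Nat.le_self_pow hj0 q
    rw [Finset.sum_range_succ]
    omega

/-- Numerical parameters for the weight function of `exists_weights`: weight `c` everywhere, plus
one on a fraction `t / q` of the words of length `d`. -/
lemma exists_params (q k m d A : ℕ) (hq : 2 ≤ q) (hk : 2 ≤ k)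
    (hm : m = ∑ i ∈ Finset.range k, q ^ i) (hd : d < q ^ k)
    (hA1 : A * (1 + (d + m) * (q - 1)) ≤ q ^ (d + m))
    (hA : A * (1 + (d + m + 1) * (q - 1)) ≤ q ^ (d + m) + (q - 1)) :
    ∃ c t, A ≤ c * q ^ d + t * q ^ (d - 1) ∧ t ≤ q ∧ (t = 0 ∨ 0 < d) ∧
      (c * (1 + (d + m) * (q - 1)) + (1 + m * (q - 1)) + d * (t - 1) ≤ q ^ m ∨ t = 0) ∧
      c * (1 + (d + m) * (q - 1)) + d * t ≤ q ^ m := by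
  rcases Nat.eq_zero_or_pos d with rfl | hd0
  · exact ⟨A, 0, by simp, by omega, Or.inl rfl, Or.inr rfl, by simpa using hA1⟩
  have hgeom : m * (q - 1) + 1 = q ^ k := by
    obtain ⟨s, rfl⟩ : ∃ s, q = s + 1 := ⟨q - 1, by omega⟩
    rw [hm]; exact geom_sum_mul_add s k
  by_cases hbig : 2 * (k + 1) ≤ m
  · obtain ⟨c, h1, h2⟩ := generic_params q k m d A hq hbig (by
      have h1 : d * (q - 1) + (q - 1) ≤ q ^ k * (q - 1) := by
        rw [← Nat.succ_mul]; exact Nat.mul_le_mul_right _ hd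
      have h2 : q ^ (k + 1) = q ^ k * (q - 1) + q ^ k := by
        rw [pow_succ, ← Nat.mul_succ]; congr; omega
      rw [add_mul]; omega) hA
    exact ⟨c, 0, by simpa using h1, by omega, Or.inl rfl, Or.inr rfl, by simpa using h2⟩
  · have hmem : (q, k, m) ∈
        ([(2, 2, 3), (2, 3, 7), (3, 2, 4), (4, 2, 5)] : List (ℕ × ℕ × ℕ)) := by
      have hlin : ∀ k₀, k₀ ≤ k → ¬ 2 * (k₀ + 1) ≤ ∑ i ∈ Finset.range k₀, q ^ i :=
        fun k₀ h h' => hbig (hm ▸ le_geomSum q hq h h')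
      have hq5 : q < 5 := by
        by_contra h
        exact hlin 2 hk (by simp [Finset.sum_range_succ]; omega)
      have hk4 : k < 4 := by
        by_contra h
        refine hlin 4 (by omega) ?_
        interval_cases q <;> decide
      interval_cases q <;> interval_cases k <;> subst hm <;> first | decide | exact absurd (by decide) (hlin 3 le_rfl)
    obtain ⟨d, rfl⟩ : ∃ e, d = e + 1 := ⟨d - 1, by omega⟩
    have := exceptional_params _ hmem d (by simp; omega)
    simp only at this
    obtain ⟨h1, h2, h3, h4⟩ := this
    refine ⟨_, _, le_trans ?_ h1, h2, Or.inr hd0, h3, h4⟩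
    rw [Nat.le_div_iff_mul_le (by omega)]
    refine le_trans (le_of_eq ?_) hA
    ring

/-! ### Codes of distance three -/

open Finset in
/-- A coset of a (shortened) Hamming code, carried from the field with `q` elements to `Fin q`. The
columns of the parity check matrix represent distinct points of projective space, and some syndrome
is taken at least `q ^ m / q ^ k` times. -/
lemma exists_distance_three_code (q k m : ℕ) (hq : IsPrimePow q)
    (hm : m ≤ ∑ i ∈ Finset.range k, q ^ i) :
    ∃ C : Finset (Fin m → Fin q), q ^ m ≤ #C * q ^ k ∧
      ∀ x ∈ C, ∀ y ∈ C, x ≠ y → 3 ≤ hammingDist x y := by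
  classical
  obtain ⟨p, l, hp, hl, rfl⟩ := (isPrimePow_nat_iff q).1 hq
  have : Fact p.Prime := ⟨hp⟩
  set F := GaloisField p l
  set q := p ^ l
  have hF : Nat.card F = q := GaloisField.card p l hl.ne'
  have : Fintype F := Fintype.ofFinite F
  have hF' : Fintype.card F = q := by rw [← Nat.card_eq_fintype_card, hF]
  let φ : Fin q ≃ F := Fintype.equivOfCardEq (by simp [hF'])
  let V := Fin k → F
  have : Finite (Projectivization F V) :=
    (Projectivization.finite_iff_of_finite F V).2 inferInstance
  have : Fintype (Projectivization F V) := Fintype.ofFinite _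
  have hP : Fintype.card (Projectivization F V) = ∑ i ∈ range k, q ^ i := by
    rw [← Nat.card_eq_fintype_card, Projectivization.card_of_finrank F V (n := k) (by simp [V]), hF]
  obtain ⟨e⟩ : Nonempty (Fin m ↪ Projectivization F V) :=
    Function.Embedding.nonempty_of_card_le (by simpa [hP] using hm)
  let s : (Fin m → Fin q) → V := fun x => ∑ i, φ (x i) • (e i).rep
  obtain ⟨v, hv⟩ : ∃ v : V, q ^ m ≤ #{x | s x = v} * q ^ k := by
    by_contra! hcon
    have h1 := card_eq_sum_card_fiberwise (f := s) (s := univ) (t := univ) (fun _ _ => mem_univ _)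
    have h2 : ∑ v : V, #{x | s x = v} * q ^ k < ∑ v : V, q ^ m :=
      sum_lt_sum_of_nonempty univ_nonempty fun v _ => hcon v
    rw [← sum_mul, ← h1] at h2
    simp [V, hF', mul_comm] at h2
  refine ⟨_, hv, fun x hx y hy hxy => ?_⟩
  simp only [mem_filter, mem_univ, true_and] at hx hy
  by_contra! hlt
  -- The difference `z` has weight at most two and syndrome zero, so two columns are proportional.
  set z : Fin m → F := fun i => φ (x i) - φ (y i)
  have hz : ∀ i, z i = 0 ↔ x i = y i := fun i => by simp [z, sub_eq_zero]
  have hsum : ∑ i, z i • (e i).rep = 0 := by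
    simp only [z, sub_smul, sum_sub_distrib]
    exact sub_eq_zero.2 (hx.trans hy.symm)
  obtain ⟨i, hi⟩ : ∃ i, x i ≠ y i := Function.ne_iff.1 hxy
  have hi' : z i ≠ 0 := fun h => hi ((hz i).1 h)
  have hcard : #({j | x j ≠ y j} : Finset (Fin m)) ≤ 2 := Nat.le_of_lt_succ hlt
  have h1 : #(({j | x j ≠ y j} : Finset (Fin m)).erase i) ≤ 1 := by
    rw [card_erase_of_mem (by simpa using hi)]; omega
  rcases Finset.eq_empty_or_nonempty (({j | x j ≠ y j} : Finset (Fin m)).erase i) with h | ⟨j, hj⟩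
  · have hone : ∀ a, a ≠ i → z a • (e a).rep = 0 := fun a ha => by
      have : x a = y a := by
        by_contra hc
        exact notMem_empty a (h ▸ by simp [ha, hc])
      rw [(hz a).2 this, zero_smul]
    rw [Fintype.sum_eq_single i hone] at hsum
    exact (smul_ne_zero hi' (e i).rep_nonzero) hsum
  · have hji : j ≠ i := ne_of_mem_erase hj
    have htwo : ∀ a, a ≠ i ∧ a ≠ j → z a • (e a).rep = 0 := fun a ha => by
      have : x a = y a := by
        by_contra hc
        exact ha.2 (card_le_one.1 h1 a (by simp [ha.1, hc]) j hj)
      rw [(hz a).2 this, zero_smul]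
    rw [Fintype.sum_eq_add i j hji.symm htwo] at hsum
    refine hji.symm (e.injective ?_)
    rw [← (e i).mk_rep, ← (e j).mk_rep, Projectivization.mk_eq_mk_iff']
    refine ⟨-((z i)⁻¹ * z j), ?_⟩
    rw [neg_smul, mul_smul, ← smul_neg, ← eq_neg_of_add_eq_zero_left hsum, inv_smul_smul₀ hi']

/-! ### Spheres and weight functions -/

open Finset in
/-- A bound on the number of neighbours of `x` in `S` from a bound along each coordinate line. -/
lemma card_sphere_inter_le {n q : ℕ} (x : Fin n → Fin q) (S : (Fin n → Fin q) → Prop)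
    [DecidablePred S] (t : ℕ)
    (hS : ∀ i, #{s | s ≠ x i ∧ S (Function.update x i s)} ≤ t) :
    #{y | hammingDist y x = 1 ∧ S y} ≤ n * t := by
  classical
  have hsub : ({y | hammingDist y x = 1 ∧ S y} : Finset (Fin n → Fin q)) ⊆
      (univ.sigma fun i => {s | s ≠ x i ∧ S (Function.update x i s)}).image
        fun p : (_ : Fin n) × Fin q => Function.update x p.1 p.2 := by
    intro y hy
    simp only [mem_filter, mem_univ, true_and] at hy
    obtain ⟨i, hi⟩ := card_eq_one.1 hy.1
    have hdiff : ∀ a, y a ≠ x a ↔ a = i := fun a => by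
      simpa using Finset.ext_iff.1 hi a
    have hyx : Function.update x i (y i) = y := by
      funext a
      by_cases ha : a = i
      · subst ha; simp
      · rw [Function.update_of_ne ha]
        by_contra hc
        exact ha ((hdiff a).1 (Ne.symm hc))
    refine mem_image.2 ⟨⟨i, y i⟩, ?_, hyx⟩
    simp [hyx, hy.2, (hdiff i).2 rfl]
  calc _ ≤ _ := card_le_card hsub
    _ ≤ _ := card_image_le
    _ = ∑ i, #{s | s ≠ x i ∧ S (Function.update x i s)} := card_sigma _ _
    _ ≤ ∑ _i : Fin n, t := sum_le_sum fun i _ => hS i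
    _ = n * t := by simp

open Finset in
lemma card_sphere_le {n q : ℕ} (x : Fin n → Fin q) :
    #{y | hammingDist y x = 1} ≤ n * (q - 1) := by
  have := card_sphere_inter_le x (fun _ => True) (q - 1) fun i => by
    simp [filter_ne', card_erase_of_mem]
  simpa using this

open Finset in
lemma card_ball_le {n q : ℕ} (x : Fin n → Fin q) :
    #{y | hammingDist y x ≤ 1} ≤ 1 + n * (q - 1) := by
  classical
  have hsub : ({y | hammingDist y x ≤ 1} : Finset (Fin n → Fin q)) ⊆
      {x} ∪ ({y | hammingDist y x = 1} : Finset (Fin n → Fin q)) := by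
    intro y hy
    simp only [mem_filter, mem_univ, true_and, mem_union, mem_singleton] at hy ⊢
    rcases Nat.le_one_iff_eq_zero_or_eq_one.1 hy with h | h
    · exact Or.inl (hammingDist_eq_zero.1 h)
    · exact Or.inr h
  refine (card_le_card hsub).trans ((card_union_le _ _).trans ?_)
  have := card_sphere_le x
  simp only [card_singleton]
  omega

open Finset in
/-- The weight `w u` is the number of correct codewords allotted to the prefix `u`. It is `c`, plus
one if the coordinate sum of `u` in `ℤ/q` is one of `t` chosen residues. Changing one coordinate of
`u` to its `q` possible values gives each sum exactly once, so a word has at most `d * t` heavy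
neighbours, and at most `d * (t - 1)` if it is heavy itself. The second conclusion says that in the
last block there is room for the balls around the `w u` codewords and for one extra point per
codeword of a neighbouring prefix. -/
lemma exists_weights {q m d c t : ℕ} (hq : 2 ≤ q) (ht : t ≤ q) (htd : t = 0 ∨ 0 < d)
    (h1 : c * (1 + (d + m) * (q - 1)) + (1 + m * (q - 1)) + d * (t - 1) ≤ q ^ m ∨ t = 0)
    (h2 : c * (1 + (d + m) * (q - 1)) + d * t ≤ q ^ m) :
    ∃ w : (Fin d → Fin q) → ℕ, c * q ^ d + t * q ^ (d - 1) ≤ ∑ u, w u ∧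
      ∀ u, w u * (1 + m * (q - 1)) +
        ∑ u' with hammingDist u' u = 1, w u' ≤ q ^ m := by
  classical
  have : NeZero q := ⟨by omega⟩
  set T : Finset (Fin q) := {s | s.val < t} with hT
  have hTc : #T = t := by rw [hT, Fin.card_filter_val_lt]; omega
  let S : (Fin d → Fin q) → Prop := fun u => ∑ i, u i ∈ T
  refine ⟨fun u => c + if S u then 1 else 0, ?_, fun u => ?_⟩
  · have hSc : t * q ^ (d - 1) ≤ #{u | S u} := by
      rcases htd with rfl | hd
      · simp
      obtain ⟨e, rfl⟩ : ∃ e, d = e + 1 := ⟨d - 1, by omega⟩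
      have := card_le_card_of_injOn (s := T ×ˢ (univ : Finset (Fin e → Fin q)))
        (t := ({u | S u} : Finset (Fin (e + 1) → Fin q)))
        (fun p => Fin.cons (p.1 - ∑ i, p.2 i) p.2)
        (fun p hp => by
          have := (mem_product.1 hp).1
          simp [S, Fin.sum_univ_succ, this])
        (fun p hp p' hp' h => by
          have h := Fin.cons_injective2 h
          ext1
          · have h' := h.1
            rw [h.2] at h'
            exact sub_left_injective h'
          · exact h.2)
      simpa [hTc] using this
    simp only [sum_add_distrib, sum_const, card_univ, Fintype.card_pi, Fintype.card_fin,
      prod_const, smul_eq_mul]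
    rw [mul_comm c]
    rw [card_filter] at hSc
    omega
  · have hsph : ∑ u' with hammingDist u' u = 1, (c + if S u' then 1 else 0) ≤
        c * (d * (q - 1)) + #{u' | hammingDist u' u = 1 ∧ S u'} := by
      rw [sum_add_distrib, sum_const, smul_eq_mul, mul_comm, sum_boole, filter_filter]
      exact Nat.add_le_add_right (Nat.mul_le_mul_left _ (card_sphere_le u)) _
    -- changing one coordinate changes the sum injectively
    have hupd : ∀ i s, ∑ j, Function.update u i s j = (s - u i) + ∑ j, u j := fun i s => by
      rw [sum_update_of_mem (mem_univ i), ← add_sum_erase univ u (mem_univ i), sdiff_singleton_eq_erase]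
      abel
    have hinj : ∀ i, Set.InjOn (fun s => ∑ j, Function.update u i s j) Set.univ := by
      intro i s _ s' _ h
      simp only [hupd] at h
      simpa using h
    have e1 : c * (1 + (d + m) * (q - 1)) = c * (1 + m * (q - 1)) + c * (d * (q - 1)) := by ring
    by_cases hu : S u
    · have hn : #{u' | hammingDist u' u = 1 ∧ S u'} ≤ d * (t - 1) := by
        refine card_sphere_inter_le u S (t - 1) fun i => ?_
        rw [← hTc, ← card_erase_of_mem (show ∑ j, u j ∈ T from hu)]
        refine card_le_card_of_injOn (fun s => ∑ j, Function.update u i s j) ?_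
          ((hinj i).mono (Set.subset_univ _))
        intro s hs
        have hs := (mem_filter.1 hs).2
        refine mem_erase.2 ⟨?_, hs.2⟩
        show ∑ j, Function.update u i s j ≠ _
        rw [hupd]
        simpa [sub_eq_zero] using hs.1
      rcases h1 with h1 | rfl
      · simp only [if_pos hu, add_mul, one_mul] at *
        omega
      · simp [S, hT] at hu
    · have hn : #{u' | hammingDist u' u = 1 ∧ S u'} ≤ d * t := by
        refine card_sphere_inter_le u S t fun i => ?_
        rw [← hTc]
        exact card_le_card_of_injOn (fun s => ∑ j, Function.update u i s j)
          (fun s hs => (mem_filter.1 hs).2.2) ((hinj i).mono (Set.subset_univ _))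
      simp only [if_neg hu, add_zero] at *
      omega

/-! ### Encoding with one feedback -/

lemma exists_injOn_mapsTo {α β : Type*} {s : Finset α} {t : Finset β} (h : s.card ≤ t.card)
    (f₀ : α → β) : ∃ f : α → β, (∀ a ∈ s, f a ∈ t) ∧ Set.InjOn f s := by
  classical
  obtain ⟨e⟩ : Nonempty (s ↪ t) := Function.Embedding.nonempty_of_card_le (by simpa using h)
  refine ⟨fun a => if ha : a ∈ s then (e ⟨a, ha⟩).1 else f₀ a, fun a ha => by simp [ha], ?_⟩
  intro a ha b hb hab
  have ha' : a ∈ s := ha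
  have hb' : b ∈ s := hb
  simp only [ha', hb', dite_true] at hab
  simpa using e.injective (Subtype.ext hab)

open Finset in
/-- One feedback, no error so far: if `α` fits into the weights `w`, its messages can be encoded in
two blocks with disjoint clouds. When the prefix is received correctly, messages sharing that prefix
use distinct codewords of `C`; when it is received with an error, the second block is a point
outside the balls around those codewords, chosen injectively. -/
lemma exists_clouds {α : Type*} [Fintype α] {q d m : ℕ} (C : Finset (Fin m → Fin q))
    (hC : ∀ x ∈ C, ∀ y ∈ C, x ≠ y → 3 ≤ hammingDist x y) (w : (Fin d → Fin q) → ℕ)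
    (hα : Fintype.card α ≤ ∑ u, w u) (hwC : ∀ u, w u ≤ #C)
    (hw : ∀ u, w u * (1 + m * (q - 1)) + ∑ u' with hammingDist u' u = 1, w u' ≤ q ^ m) :
    ∃ (g : α → (Fin d → Fin q)) (h : α → (Fin d → Fin q) → (Fin m → Fin q)),
      ∀ a b, a ≠ b → ∀ y z, hammingDist y (g a) + hammingDist z (h a y) ≤ 1 →
        hammingDist y (g b) + hammingDist z (h b y) ≤ 1 → False := by
  classical
  have hκ : ∀ u, ∃ κ : Fin (w u) → (Fin m → Fin q), (∀ i, κ i ∈ C) ∧ Function.Injective κ := by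
    intro u
    obtain ⟨e⟩ : Nonempty (Fin (w u) ↪ C) :=
      Function.Embedding.nonempty_of_card_le (by simpa using hwC u)
    exact ⟨fun i => (e i).1, fun i => (e i).2, Subtype.val_injective.comp e.injective⟩
  choose κ hκC hκ using hκ
  obtain ⟨ε⟩ : Nonempty (α ↪ (u : Fin d → Fin q) × Fin (w u)) :=
    Function.Embedding.nonempty_of_card_le (by simpa using hα)
  let g : α → (Fin d → Fin q) := fun a => (ε a).1
  let k : α → (Fin m → Fin q) := fun a => κ _ (ε a).2
  have hk : ∀ a b, a ≠ b → g a = g b → 3 ≤ hammingDist (k a) (k b) := by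
    intro a b hab hg
    refine hC _ (hκC _ _) _ (hκC _ _) ?_
    have key : ∀ p p' : (u : Fin d → Fin q) × Fin (w u), p ≠ p' → p.1 = p'.1 →
        κ _ p.2 ≠ κ _ p'.2 := by
      rintro ⟨u, i⟩ ⟨u', i'⟩ hne rfl heq
      exact hne (congrArg (Sigma.mk u) (hκ u heq))
    exact key _ _ (ε.injective.ne hab) hg
  have hfib : ∀ u, #{a | g a = u} ≤ w u := by
    intro u
    have := card_le_card_of_injOn (s := ({a | g a = u} : Finset α))
      (t := (univ : Finset (Fin (w u))).map ⟨Sigma.mk u, sigma_mk_injective⟩) ε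
      (fun a ha => by
        have ha : (ε a).1 = u := (mem_filter.1 ha).2
        subst ha
        simp) ε.injective.injOn
    simpa using this
  -- `D y`: messages one error away from the received prefix `y`; `L y`: the union of the balls of
  -- the messages with prefix exactly `y`.
  let D : (Fin d → Fin q) → Finset α := fun y => {a | hammingDist y (g a) = 1}
  let L : (Fin d → Fin q) → Finset (Fin m → Fin q) := fun y =>
    ({a | g a = y} : Finset α).biUnion fun a => {z | hammingDist z (k a) ≤ 1}
  have hL : ∀ y, #(L y) ≤ w y * (1 + m * (q - 1)) := fun y =>
    (card_biUnion_le_card_mul _ _ _ fun a _ => card_ball_le _).trans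
      (Nat.mul_le_mul_right _ (hfib y))
  have hD : ∀ y, #(D y) ≤ ∑ u' with hammingDist u' y = 1, w u' := fun y => by
    have hsub : D y ⊆ ({u' | hammingDist u' y = 1} : Finset (Fin d → Fin q)).biUnion
        fun u' => ({a | g a = u'} : Finset α) := by
      intro a ha
      have ha : hammingDist y (g a) = 1 := (mem_filter.1 ha).2
      simpa [hammingDist_comm] using ha
    exact (card_le_card hsub).trans (card_biUnion_le.trans (sum_le_sum fun u' _ => hfib u'))
  have hψ : ∀ y, ∃ ψ : α → (Fin m → Fin q), (∀ a ∈ D y, ψ a ∈ (L y)ᶜ) ∧ Set.InjOn ψ (D y) := by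
    intro y
    refine exists_injOn_mapsTo ?_ k
    rw [card_compl]
    have := hL y
    have := hD y
    have := hw y
    simp only [Fintype.card_pi, Fintype.card_fin, prod_const, card_univ]
    omega
  choose ψ hψL hψ using hψ
  refine ⟨g, fun a y => if g a = y then k a else ψ y a, ?_⟩
  -- A ball of a message with prefix `y` misses the points of messages with a neighbouring prefix.
  have mixed : ∀ a b y z, hammingDist y (g a) = 0 →
      hammingDist z (if g a = y then k a else ψ y a) ≤ 1 → hammingDist y (g b) = 1 →
      hammingDist z (if g b = y then k b else ψ y b) = 0 → False := by
    intro a b y z ha hza hb hzb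
    have ha : g a = y := (hammingDist_eq_zero.1 ha).symm
    have hb' : g b ≠ y := by
      rintro rfl
      simp at hb
    rw [if_pos ha] at hza
    rw [if_neg hb', hammingDist_eq_zero] at hzb
    have := hψL y b (mem_filter.2 ⟨mem_univ _, hb⟩)
    rw [mem_compl, ← hzb] at this
    exact this (mem_biUnion.2 ⟨a, by simp [ha], by simpa using hza⟩)
  intro a b hab y z ha hb
  beta_reduce at ha hb
  rcases Nat.eq_zero_or_pos (hammingDist y (g a)) with ha0 | ha1
  · rcases Nat.eq_zero_or_pos (hammingDist y (g b)) with hb0 | hb1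
    · have hga : g a = y := (hammingDist_eq_zero.1 ha0).symm
      have hgb : g b = y := (hammingDist_eq_zero.1 hb0).symm
      have h3 := hk a b hab (hga.trans hgb.symm)
      have ht := hammingDist_triangle_left (k a) (k b) z
      simp only [if_pos hga, if_pos hgb] at ha hb
      omega
    · exact mixed a b y z ha0 (by omega) (by omega) (by omega)
  · rcases Nat.eq_zero_or_pos (hammingDist y (g b)) with hb0 | hb1
    · exact mixed b a y z hb0 (by omega) (by omega) (by omega)
    · have hga : g a ≠ y := by
        intro h
        simp [h] at ha1
      have hgb : g b ≠ y := by
        intro h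
        simp [h] at hb1
      simp only [if_neg hga, if_neg hgb] at ha hb
      have hza := hammingDist_eq_zero.1 (show hammingDist z (ψ y a) = 0 by omega)
      have hzb := hammingDist_eq_zero.1 (show hammingDist z (ψ y b) = 0 by omega)
      exact hab (hψ y (mem_filter.2 ⟨mem_univ _, by omega⟩)
        (mem_filter.2 ⟨mem_univ _, by omega⟩) (hza.symm.trans hzb))

open Finset in
/-- One feedback, mixed state: the messages in `A₀` have suffered no error and the others exactly
one. Each of the latter only needs one point, and by the volume bound there are enough points
outside the clouds of the former. -/
lemma exists_one_feedback {ι : Type*} [Fintype ι] [DecidableEq ι] {q d m : ℕ} (A₀ : Finset ι)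
    (C : Finset (Fin m → Fin q)) (hC : ∀ x ∈ C, ∀ y ∈ C, x ≠ y → 3 ≤ hammingDist x y)
    (w : (Fin d → Fin q) → ℕ) (hA : #A₀ ≤ ∑ u, w u) (hwC : ∀ u, w u ≤ #C)
    (hw : ∀ u, w u * (1 + m * (q - 1)) + ∑ u' with hammingDist u' u = 1, w u' ≤ q ^ m)
    (hvol : #A₀ * (1 + (d + m) * (q - 1)) + #A₀ᶜ ≤ q ^ (d + m)) :
    ∃ (g : ι → (Fin d → Fin q)) (h : ι → (Fin d → Fin q) → (Fin m → Fin q)),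
      ∀ a b, a ≠ b → ∀ y z,
        (if a ∈ A₀ then 0 else 1) + hammingDist y (g a) + hammingDist z (h a y) ≤ 1 →
        (if b ∈ A₀ then 0 else 1) + hammingDist y (g b) + hammingDist z (h b y) ≤ 1 → False := by
  classical
  obtain ⟨g, h, hgh⟩ := exists_clouds (α := A₀) C hC w (by simpa using hA) hwC hw
  let cl : A₀ → Finset ((Fin d → Fin q) × (Fin m → Fin q)) := fun a =>
    {p | hammingDist p.1 (g a) + hammingDist p.2 (h a p.1) ≤ 1}
  have hcl : ∀ a, #(cl a) ≤ 1 + (d + m) * (q - 1) := by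
    intro a
    have hsub : cl a ⊆ ({z | hammingDist z (h a (g a)) ≤ 1} : Finset (Fin m → Fin q)).image
          (fun z => (g a, z)) ∪
        ({y | hammingDist y (g a) = 1} : Finset (Fin d → Fin q)).image (fun y => (y, h a y)) := by
      rintro ⟨y, z⟩ hp
      have hp : hammingDist y (g a) + hammingDist z (h a y) ≤ 1 := (mem_filter.1 hp).2
      rcases Nat.eq_zero_or_pos (hammingDist y (g a)) with h0 | h1
      · have hy := hammingDist_eq_zero.1 h0
        subst hy
        refine mem_union_left _ (mem_image.2 ⟨z, ?_, rfl⟩)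
        simpa using hp
      · have hz := hammingDist_eq_zero.1 (show hammingDist z (h a y) = 0 by omega)
        refine mem_union_right _ (mem_image.2 ⟨y, ?_, by rw [hz]⟩)
        exact mem_filter.2 ⟨mem_univ _, by omega⟩
    have h1 := card_ball_le (h a (g a))
    have h2 := card_sphere_le (g a)
    refine (card_le_card hsub).trans ((card_union_le _ _).trans
      ((add_le_add card_image_le card_image_le).trans ?_))
    rw [add_mul]
    omega
  have hcard : #A₀ᶜ ≤ #((univ.biUnion cl)ᶜ) := by
    have := card_biUnion_le_card_mul univ cl _ fun a _ => hcl a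
    rw [card_univ, Fintype.card_coe] at this
    rw [card_compl (univ.biUnion cl)]
    simp only [Fintype.card_prod, Fintype.card_pi, Fintype.card_fin, prod_const, card_univ,
      ← pow_add]
    omega
  obtain ⟨e⟩ : Nonempty ((A₀ᶜ : Finset ι) ↪ ((univ.biUnion cl)ᶜ : Finset _)) :=
    Function.Embedding.nonempty_of_card_le (by simpa only [Fintype.card_coe] using hcard)
  refine ⟨fun a => if ha : a ∈ A₀ then g ⟨a, ha⟩ else (e ⟨a, mem_compl.2 ha⟩).1.1,
    fun a y => if ha : a ∈ A₀ then h ⟨a, ha⟩ y else (e ⟨a, mem_compl.2 ha⟩).1.2, ?_⟩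
  have mixed : ∀ (a b : ι) (ha : a ∈ A₀) (hb : b ∉ A₀) y z,
      hammingDist y (g ⟨a, ha⟩) + hammingDist z (h ⟨a, ha⟩ y) ≤ 1 →
      y = (e ⟨b, mem_compl.2 hb⟩).1.1 → z = (e ⟨b, mem_compl.2 hb⟩).1.2 → False := by
    rintro a b ha hb y z hab rfl rfl
    refine mem_compl.1 (e ⟨b, mem_compl.2 hb⟩).2 (mem_biUnion.2 ⟨⟨a, ha⟩, mem_univ _, ?_⟩)
    exact mem_filter.2 ⟨mem_univ _, hab⟩
  intro a b hab y z h1 h2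
  by_cases ha : a ∈ A₀ <;> by_cases hb : b ∈ A₀ <;>
    simp only [ha, hb, dite_true, dite_false, if_true, if_false, zero_add, add_assoc,
      add_le_iff_nonpos_right, Nat.le_zero, Nat.add_eq_zero_iff,
      hammingDist_eq_zero] at h1 h2
  · exact hgh _ _ (fun h => hab (congrArg Subtype.val h)) y z h1 h2
  · exact mixed a b ha hb y z h1 h2.1 h2.2
  · exact mixed b a hb ha y z h2 h1.1 h1.2
  · have := e.injective (Subtype.ext (Prod.ext (h1.1.symm.trans h2.1) (h1.2.symm.trans h2.2)))
    exact hab (congrArg Subtype.val this)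

/-! ### Assembling the three blocks -/

/-- For a prime power `q` and `n ≥ q + 1`, the optimal complete-feedback number of
messages `M_cf(n)` can be transmitted with only two instances of feedback. -/
theorem two_feedback_achieves_Mcf (q n : ℕ) (hq : IsPrimePow q) (hn : q + 1 ≤ n) :
    ∃ n1 n2 n3 : ℕ, n1 + n2 + n3 = n ∧ TwoFeedbackCode q n1 n2 n3 (Mcf q n) := by
  have hq2 : 2 ≤ q := hq.two_le
  obtain ⟨N, rfl⟩ : ∃ N, n = N + 1 := ⟨n - 1, by omega⟩
  obtain ⟨A, hMA, hvol, hA⟩ := Mcf_split q N hq2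
  generalize Mcf q (N + 1) = M at *
  have hNq : q ≤ N := by omega
  clear hn
  rcases hNq.eq_or_lt with rfl | hNq
  · -- For `n = q + 1` the perfect Hamming code suffices, without feedback.
    obtain ⟨C, hC, hdist⟩ := exists_distance_three_code q 2 (q + 1) hq
      (by simp [Finset.sum_range_succ, add_comm])
    have hMC : M ≤ C.card := by
      obtain ⟨s, rfl⟩ : ∃ s, q = s + 2 := ⟨q - 2, by omega⟩
      have e1 : 1 + (s + 2 + 1) * (s + 2 - 1) = (s + 2) ^ 2 := by
        rw [show s + 2 - 1 = s + 1 by omega]; ring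
      rw [e1, show (s + 2) ^ (s + 2) = (s + 2) ^ s * (s + 2) ^ 2 by rw [← pow_add]] at hA
      have h0 : A < (s + 2) ^ s + 1 := by
        refine lt_of_mul_lt_mul_right (a := (s + 2) ^ 2) (hA.trans_lt ?_) (Nat.zero_le _)
        rw [add_mul, one_mul]
        have : s + 2 ≤ (s + 2) ^ 2 := Nat.le_self_pow (by omega) _
        omega
      have h2 : (s + 2) ^ (s + 1) * (s + 2) ^ 2 ≤ C.card * (s + 2) ^ 2 := by
        refine le_trans (le_of_eq ?_) hC
        rw [← pow_add]
      have h3 := Nat.le_of_mul_le_mul_right h2 (by positivity)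
      refine hMA.trans (le_trans ?_ h3)
      rw [pow_succ']
      exact Nat.mul_le_mul_left _ (by omega)
    obtain ⟨e⟩ : Nonempty (Fin M ↪ C) :=
      Function.Embedding.nonempty_of_card_le (by simpa using hMC)
    refine ⟨0, 0, q + 1, by omega, fun _ => Fin.elim0, fun _ _ => Fin.elim0,
      fun a _ _ => (e a).1, fun a b hab => Set.disjoint_left.2 ?_⟩
    rintro ⟨x, y, z⟩ h1 h2
    simp only [Set.mem_ofPred_eq] at h1 h2
    have h3 := hdist _ (e a).2 _ (e b).2 (fun h => hab (e.injective (Subtype.ext h)))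
    have h4 := hammingDist_triangle_left (e a).1 (e b).1 z
    omega
  · -- `m` is the largest Hamming length `1 + q + ⋯ + q ^ (k - 1)` not exceeding `N`
    obtain ⟨k, hk, hkN, hNk⟩ : ∃ k, 2 ≤ k ∧ ∑ i ∈ Finset.range k, q ^ i ≤ N ∧
        N < ∑ i ∈ Finset.range (k + 1), q ^ i := by
      have hex : ∃ j, N < ∑ i ∈ Finset.range j, q ^ i :=
        ⟨N + 1, by
          have : ∑ i ∈ Finset.range (N + 1), 1 ≤ ∑ i ∈ Finset.range (N + 1), q ^ i :=
            Finset.sum_le_sum fun i _ => Nat.one_le_pow _ _ (by omega)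
          simp at this
          omega⟩
      have hspec := Nat.find_spec hex
      have hmin := fun j => Nat.find_min hex (m := j)
      generalize Nat.find hex = j at *
      have hj : 3 ≤ j := by
        by_contra hlt
        have : j < 3 := by omega
        interval_cases j <;> simp [Finset.sum_range_succ] at hspec <;> omega
      obtain ⟨k, rfl⟩ : ∃ k, j = k + 1 := ⟨j - 1, by omega⟩
      exact ⟨k, by omega, not_lt.1 (hmin k (by omega)), hspec⟩
    rw [Finset.sum_range_succ] at hNk
    obtain ⟨C, hC, hdist⟩ := exists_distance_three_code q k _ hq le_rfl
    have hgeom : 1 + (∑ i ∈ Finset.range k, q ^ i) * (q - 1) = q ^ k := by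
      obtain ⟨s, rfl⟩ : ∃ s, q = s + 1 := ⟨q - 1, by omega⟩
      rw [add_comm]
      exact geom_sum_mul_add s k
    generalize hm : ∑ i ∈ Finset.range k, q ^ i = m at *
    obtain ⟨d, rfl⟩ : ∃ d, N = d + m := ⟨N - m, by omega⟩
    have hA1 : A * (1 + (d + m) * (q - 1)) ≤ q ^ (d + m) := by
      rcases Nat.eq_zero_or_pos A with rfl | hApos
      · simp
      · have e1 : A * (1 + (d + m + 1) * (q - 1)) =
            A * (1 + (d + m) * (q - 1)) + A * (q - 1) := by ring
        have := Nat.le_mul_of_pos_left (q - 1) hApos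
        omega
    obtain ⟨c, t, h1, h2, h3, h4, h5⟩ := exists_params q k m d A hq2 hk hm.symm (by omega) hA1 hA
    obtain ⟨w, hw1, hw2⟩ := exists_weights hq2 h2 h3 h4 h5
    have hwC : ∀ u, w u ≤ C.card := fun u => by
      have := hw2 u
      rw [hgeom] at this
      exact Nat.le_of_mul_le_mul_right ((Nat.le_of_add_right_le this).trans hC) (by positivity)
    have hA0 : ∀ a : Fin M, 0 < A := fun a => Nat.pos_of_ne_zero fun h => by
      have := a.2
      simp [h] at hMA
      omega
    let f : Fin M → Fin q := fun a => ⟨a / A, by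
      rw [Nat.div_lt_iff_lt_mul (hA0 a)]
      exact a.2.trans_le hMA⟩
    let A₀ : (Fin 1 → Fin q) → Finset (Fin M) := fun x => {a | f a = x 0}
    have hA₀ : ∀ x, (A₀ x).card ≤ A := fun x => by
      have := Finset.card_le_card_of_injOn (s := A₀ x) (t := Finset.range A) (fun a => a % A)
        (fun a _ => by simpa using Nat.mod_lt _ (hA0 a))
        (fun a ha b hb hab => by
          have ha : f a = x 0 := (Finset.mem_filter.1 ha).2
          have hb : f b = x 0 := (Finset.mem_filter.1 hb).2
          have hdiv : (a : ℕ) / A = b / A := congrArg Fin.val (ha.trans hb.symm)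
          have hab : (a : ℕ) % A = b % A := hab
          refine Fin.ext ?_
          rw [← Nat.div_add_mod a A, ← Nat.div_add_mod b A, hdiv, hab])
      simpa using this
    have main := fun x => exists_one_feedback (A₀ x) C hdist w ((hA₀ x).trans (h1.trans hw1)) hwC hw2
      (by
        have hle := Nat.mul_le_mul_right ((d + m) * (q - 1)) (hA₀ x)
        have := Finset.card_add_card_compl (A₀ x)
        rw [Fintype.card_fin] at this
        rw [mul_add, mul_one]
        omega)
    choose g h hgh using main
    refine ⟨1, d, m, by omega, fun a _ => f a, fun a x => g x a, fun a x y => h x a y,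
      fun a b hab => Set.disjoint_left.2 ?_⟩
    rintro ⟨x, y, z⟩ ha hb
    simp only [Set.mem_ofPred_eq] at ha hb
    have hx : ∀ a, (if a ∈ A₀ x then 0 else 1) ≤ hammingDist x (fun _ => f a) := by
      intro a
      split_ifs with hmem
      · exact Nat.zero_le _
      · refine Nat.one_le_iff_ne_zero.2 fun h0 => hmem ?_
        rw [hammingDist_eq_zero] at h0
        simp [A₀, h0]
    have hxa := hx a
    have hxb := hx b
    exact hgh x a b hab y z (by omega) (by omega)
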